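/- Let n ≥ 2 and let β be a transposition in S_n. Then: (1) c(0,β) = 2·(n−2)!; (2) c(3,β) = 4·(n−2)·(n−2)!; (3) if n ≥ 3 then c(4,β) = (n−2)·(n−3)·(n−2)!; and (4) c(k,β) = 0 for every integer k with 5 ≤ k ≤ n. -/

import Mathlib

/-- Hamming metric between two permutations of `Fin n`. -/
def ham {n : ℕ} (σ τ : Equiv.Perm (Fin n)) : ℕ :=
  Finset.card (Finset.univ.filter fun a => σ a ≠ τ a)

/-- `kcomm k β` is the number of permutations `α` that `k`-commute with `β`. -/
noncomputable def kcomm {n : ℕ} (k : ℕ) (β : Equiv.Perm (Fin n)) : ℕ :=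
  Nat.card {α : Equiv.Perm (Fin n) // ham (α * β) (β * α) = k}

/-!
Since `σ * swap x y = swap (σ x) (σ y) * σ`, right invariance of the Hamming metric turns
`H(σβ, βσ)` for `β = swap x y` into the distance between the transpositions `swap (σ x) (σ y)`
and `swap x y`. It is `0`, `3` or `4` according to whether `{σ x, σ y}` and `{x, y}` share two, one
or no points. Each ordered pair of distinct points is `(σ x, σ y)` for exactly `(n - 2)!`
permutations `σ`, so it remains to count the pairs of each kind.
-/

open Equiv Finset
open scoped Nat

variable {α : Type*} [DecidableEq α] [Fintype α]

section CountingPermutations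

theorem card_perm_eqOn (g : Perm α) (s : Finset α) :
    Fintype.card {σ : Perm α // ∀ a ∈ s, σ a = g a} = (Fintype.card α - #s)! := by
  have translate : {σ : Perm α // ∀ a ∈ s, σ a = g a} ≃
      {σ : Perm α // ∀ a, ¬ a ∈ sᶜ → σ a = a} :=
    (Equiv.mulLeft g⁻¹).subtypeEquiv fun σ => by
      simp only [mem_compl, not_not, coe_mulLeft, Perm.mul_apply, Perm.inv_eq_iff_eq]
  rw [Fintype.card_congr (translate.trans (Perm.subtypeEquivSubtypePerm (· ∈ sᶜ)).symm),
    Fintype.card_perm, Fintype.card_coe, card_compl]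

theorem card_perm_apply_pair_eq {x y p q : α} (hxy : x ≠ y) (hpq : p ≠ q) :
    #{σ : Perm α | (σ x, σ y) = (p, q)} = (Fintype.card α - 2)! := by
  obtain ⟨g, rfl, rfl⟩ : ∃ g : Perm α, g x = p ∧ g y = q :=
    MulAction.is_two_pretransitive_iff.mp (Perm.isMultiplyPretransitive α 2) hxy hpq
  have count := card_perm_eqOn g {x, y}
  rw [Fintype.card_subtype, card_pair hxy] at count
  simpa using count

theorem card_perm_apply_pair_mem {x y : α} (hxy : x ≠ y) {T : Finset (α × α)}
    (hT : ∀ t ∈ T, t.1 ≠ t.2) :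
    #{σ : Perm α | (σ x, σ y) ∈ T} = #T * (Fintype.card α - 2)! := by
  rw [card_eq_sum_card_fiberwise (f := fun σ : Perm α => (σ x, σ y)) (t := T)
    (fun σ hσ => by simpa using hσ)]
  refine sum_const_nat fun t ht => ?_
  rw [← card_perm_apply_pair_eq hxy (hT t ht), filter_filter]
  congr! 2 with σ
  exact and_iff_right_of_imp fun h => h ▸ ht

end CountingPermutations

section HammingDistance

theorem hammingDist_comp_equiv {ι κ γ : Type*} [Fintype ι] [Fintype κ] [DecidableEq γ]
    (f g : κ → γ) (e : ι ≃ κ) : hammingDist (f ∘ e) (g ∘ e) = hammingDist f g :=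
  card_equiv e fun i => by rw [mem_filter_univ, mem_filter_univ, Function.comp, Function.comp]

theorem hammingDist_perm_eq_card_support (σ τ : Perm α) :
    hammingDist ⇑σ ⇑τ = #(τ⁻¹ * σ).support := by
  refine congrArg card (ext fun a => ?_)
  rw [mem_filter_univ, Perm.mem_support, Perm.mul_apply, Ne, Ne, Perm.inv_eq_iff_eq]

theorem hammingDist_mul_swap (σ : Perm α) (x y : α) :
    hammingDist ⇑(σ * swap x y) ⇑(swap x y * σ) =
      hammingDist ⇑(swap (σ x) (σ y)) ⇑(swap x y) := by
  rw [mul_swap_eq_swap_mul, Perm.coe_mul, Perm.coe_mul, hammingDist_comp_equiv]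

theorem hammingDist_swap_swap_of_common {x y q : α} (hxy : x ≠ y) (hxq : x ≠ q) (hyq : y ≠ q) :
    hammingDist ⇑(swap x q) ⇑(swap x y) = 3 := by
  rw [hammingDist_perm_eq_card_support, swap_inv]
  exact (Perm.isThreeCycle_swap_mul_swap_same hxy hxq hyq).card_support

theorem hammingDist_swap_swap_of_nodup {x y p q : α} (h : [x, y, p, q].Nodup) :
    hammingDist ⇑(swap p q) ⇑(swap x y) = 4 := by
  have hxy : x ≠ y := by grind
  have hpq : p ≠ q := by grind
  rw [hammingDist_perm_eq_card_support, swap_inv, (Perm.disjoint_swap_swap h).card_support_mul,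
    Perm.card_support_swap hxy, Perm.card_support_swap hpq]

theorem hammingDist_swap_swap {x y p q : α} (hxy : x ≠ y) (hpq : p ≠ q) :
    hammingDist ⇑(swap p q) ⇑(swap x y) =
      if p ∈ ({x, y} : Finset α) then if q ∈ ({x, y} : Finset α) then 0 else 3
      else if q ∈ ({x, y} : Finset α) then 3 else 4 := by
  split_ifs with hp hq hq <;> simp only [mem_insert, mem_singleton, not_or] at hp hq
  · have : swap p q = swap x y := by grind [swap_comm]
    rw [this, hammingDist_self]
  · obtain rfl | rfl := hp
    · exact hammingDist_swap_swap_of_common hxy hpq (Ne.symm hq.2)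
    · rw [swap_comm x p]
      exact hammingDist_swap_swap_of_common hxy.symm hpq (Ne.symm hq.1)
  · obtain rfl | rfl := hq
    · rw [swap_comm p q]
      exact hammingDist_swap_swap_of_common hxy hpq.symm (Ne.symm hp.2)
    · rw [swap_comm p q, swap_comm x q]
      exact hammingDist_swap_swap_of_common hxy.symm hpq.symm (Ne.symm hp.1)
  · exact hammingDist_swap_swap_of_nodup (by grind)

end HammingDistance

section KCommuting

/-- The permutations `σ` that `k`-commute with `β`, that is, with `H(σβ, βσ) = k`. This extends
the set counted by `kcomm` to permutations of any finite type. -/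
def kCommuting (k : ℕ) (β : Perm α) : Finset (Perm α) :=
  {σ | hammingDist ⇑(σ * β) ⇑(β * σ) = k}

theorem kcomm_eq_card_kCommuting {n : ℕ} (k : ℕ) (β : Perm (Fin n)) :
    kcomm k β = #(kCommuting k β) :=
  Nat.subtype_card _ fun σ => by rw [kCommuting, mem_filter_univ]; rfl

variable {x y : α}

theorem mem_kCommuting_swap (hxy : x ≠ y) (k : ℕ) (σ : Perm α) :
    σ ∈ kCommuting k (swap x y) ↔
      (if σ x ∈ ({x, y} : Finset α) then if σ y ∈ ({x, y} : Finset α) then 0 else 3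
        else if σ y ∈ ({x, y} : Finset α) then 3 else 4) = k := by
  rw [kCommuting, mem_filter_univ, hammingDist_mul_swap,
    hammingDist_swap_swap hxy (σ.injective.ne hxy)]

theorem kCommuting_zero_swap (hxy : x ≠ y) :
    kCommuting 0 (swap x y) =
      ({σ | (σ x, σ y) ∈ ({x, y} : Finset α).offDiag} : Finset (Perm α)) := by
  ext σ
  have := σ.injective.ne hxy
  rw [mem_kCommuting_swap hxy, mem_filter_univ, mem_offDiag]
  split_ifs <;> simp [*]

theorem kCommuting_three_swap (hxy : x ≠ y) :
    kCommuting 3 (swap x y) =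
      ({σ | (σ x, σ y) ∈ ({x, y} : Finset α) ×ˢ {x, y}ᶜ ∪ {x, y}ᶜ ×ˢ {x, y}} :
      Finset (Perm α)) := by
  ext σ
  rw [mem_kCommuting_swap hxy, mem_filter_univ, mem_union, mem_product, mem_product, mem_compl,
    mem_compl]
  split_ifs <;> simp [*]

theorem kCommuting_four_swap (hxy : x ≠ y) :
    kCommuting 4 (swap x y) =
      ({σ | (σ x, σ y) ∈ ({x, y}ᶜ : Finset α).offDiag} : Finset (Perm α)) := by
  ext σ
  have := σ.injective.ne hxy
  rw [mem_kCommuting_swap hxy, mem_filter_univ, mem_offDiag, mem_compl, mem_compl]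
  split_ifs <;> simp [*]

theorem kCommuting_swap_eq_empty (hxy : x ≠ y) {k : ℕ} (hk : 5 ≤ k) :
    kCommuting k (swap x y) = ∅ := by
  ext σ
  rw [mem_kCommuting_swap hxy]
  grind

theorem card_compl_pair (hxy : x ≠ y) : #({x, y}ᶜ : Finset α) = Fintype.card α - 2 := by
  rw [card_compl, card_pair hxy]

theorem card_kCommuting_zero_swap (hxy : x ≠ y) :
    #(kCommuting 0 (swap x y)) = 2 * (Fintype.card α - 2)! := by
  rw [kCommuting_zero_swap hxy, card_perm_apply_pair_mem hxy fun t ht => (mem_offDiag.mp ht).2.2,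
    offDiag_card, card_pair hxy]

theorem card_kCommuting_three_swap (hxy : x ≠ y) :
    #(kCommuting 3 (swap x y)) = 4 * (Fintype.card α - 2) * (Fintype.card α - 2)! := by
  have disj : Disjoint (({x, y} : Finset α) ×ˢ {x, y}ᶜ) ({x, y}ᶜ ×ˢ {x, y}) :=
    disjoint_product.mpr (Or.inl disjoint_compl_right)
  have ne : ∀ t ∈ ({x, y} : Finset α) ×ˢ {x, y}ᶜ ∪ {x, y}ᶜ ×ˢ {x, y}, t.1 ≠ t.2 := by
    grind [mem_compl]
  rw [kCommuting_three_swap hxy, card_perm_apply_pair_mem hxy ne,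
    card_union_of_disjoint disj, card_product, card_product, card_compl_pair hxy, card_pair hxy]
  ring

theorem card_kCommuting_four_swap (hxy : x ≠ y) :
    #(kCommuting 4 (swap x y)) =
      (Fintype.card α - 2) * (Fintype.card α - 3) * (Fintype.card α - 2)! := by
  rw [kCommuting_four_swap hxy, card_perm_apply_pair_mem hxy fun t ht => (mem_offDiag.mp ht).2.2,
    offDiag_card, card_compl_pair hxy, ← Nat.mul_sub_one, Nat.sub_sub]

end KCommuting

theorem stmt18_general {β : Perm α} (hβ : β.IsSwap) :
    #(kCommuting 0 β) = 2 * (Fintype.card α - 2)! ∧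
    #(kCommuting 3 β) = 4 * (Fintype.card α - 2) * (Fintype.card α - 2)! ∧
    #(kCommuting 4 β) = (Fintype.card α - 2) * (Fintype.card α - 3) * (Fintype.card α - 2)! ∧
    ∀ k, 5 ≤ k → #(kCommuting k β) = 0 := by
  obtain ⟨x, y, hxy, rfl⟩ := hβ
  exact ⟨card_kCommuting_zero_swap hxy, card_kCommuting_three_swap hxy,
    card_kCommuting_four_swap hxy,
    fun k hk => card_eq_zero.mpr (kCommuting_swap_eq_empty hxy hk)⟩

theorem stmt18 (n : ℕ) (hn : 2 ≤ n) (β : Equiv.Perm (Fin n)) (hβ : β.IsSwap) :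
    kcomm 0 β = 2 * Nat.factorial (n - 2) ∧
    kcomm 3 β = 4 * (n - 2) * Nat.factorial (n - 2) ∧
    (3 ≤ n → kcomm 4 β = (n - 2) * (n - 3) * Nat.factorial (n - 2)) ∧
    (∀ k, 5 ≤ k → k ≤ n → kcomm k β = 0) := by
  obtain ⟨h0, h3, h4, h5⟩ := by simpa only [Fintype.card_fin] using stmt18_general hβ
  simp only [kcomm_eq_card_kCommuting]
  exact ⟨h0, h3, fun _ => h4, fun k hk _ => h5 k hk⟩
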